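/- arXiv:2411.01214 — 5 statements merged into one kernel-verified Lean document; each statement's English description precedes it below -/
import Mathlib

section
/- Let D ≥ 1, let s > 0 be a speed constraint, and let t_p < t_k < t_m be real timestamps. Let x'_p, x_m ∈ ℝ^D with d(x'_p, x_m) ≤ s·(t_m − t_p). Define α = (t_k − t_p)/(t_m − t_p) and the interpolated point x'_k = x'_p + α·(x_m − x'_p). Then d(x'_k, x_m) ≤ s·(t_m − t_k), i.e., the interpolated point also satisfies the speed constraint with the succeeding anchor point x_m. -/
/-! Moving from `p` towards `q` by the fraction `(t - a) / (b - a)` leaves the complementary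
fraction `(b - t) / (b - a)` of the distance, and hence of the distance budget `s * (b - a)`. -/

section

variable {𝕜 V P : Type*} [SeminormedAddCommGroup V] [PseudoMetricSpace P] [NormedAddTorsor V P]

theorem dist_lineMap_div_sub_right [NormedField 𝕜] [NormedSpace 𝕜 V] (p q : P) {a b : 𝕜}
    (hab : a ≠ b) (t : 𝕜) :
    dist (AffineMap.lineMap p q ((t - a) / (b - a))) q = ‖(b - t) / (b - a)‖ * dist p q := by
  rw [dist_lineMap_right, one_sub_div (sub_ne_zero.mpr hab.symm), sub_sub_sub_cancel_right]

theorem interpolation_satisfies_speed_with_succeeding_general [NormedSpace ℝ V] {s tp tk tm : ℝ}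
    (htpm : tp < tm) (htkm : tk ≤ tm) {xp xm : P} (hpm : dist xp xm ≤ s * (tm - tp)) :
    dist (AffineMap.lineMap xp xm ((tk - tp) / (tm - tp))) xm ≤ s * (tm - tk) := by
  have hduration_pos : 0 < tm - tp := sub_pos.mpr htpm
  have hfraction_nonneg : 0 ≤ (tm - tk) / (tm - tp) :=
    div_nonneg (sub_nonneg.mpr htkm) hduration_pos.le
  calc
    dist (AffineMap.lineMap xp xm ((tk - tp) / (tm - tp))) xm
      = (tm - tk) / (tm - tp) * dist xp xm := by
        rw [dist_lineMap_div_sub_right xp xm htpm.ne, Real.norm_of_nonneg hfraction_nonneg]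
    _ ≤ (tm - tk) / (tm - tp) * (s * (tm - tp)) := by gcongr
    _ = s * (tm - tk) := by field_simp

end

/-- The interpolated point `x'_k = x'_p + α·(x_m − x'_p)` with
`α = (t_k − t_p)/(t_m − t_p)` also satisfies the speed constraint with the
succeeding anchor point `x_m`. -/
theorem interpolation_satisfies_speed_with_succeeding
    (D : ℕ) (hD : 1 ≤ D) (s : ℝ) (hs : 0 < s)
    (tp tk tm : ℝ) (htpk : tp < tk) (htkm : tk < tm)
    (xp xm : EuclideanSpace ℝ (Fin D))
    (hpm : dist xp xm ≤ s * (tm - tp)) :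
    dist (xp + ((tk - tp) / (tm - tp)) • (xm - xp)) xm ≤ s * (tm - tk) := by
  rw [add_comm, ← AffineMap.lineMap_apply_module']
  exact interpolation_satisfies_speed_with_succeeding_general (htpk.trans htkm) htkm.le hpm
end

section
/- Let D ≥ 1, let s > 0 be a speed constraint, let x_1, …, x_n ∈ ℝ^D be a time series with strictly increasing timestamps t_1 < … < t_n, and let S ⊆ {1, …, n} be a nonempty index set such that every pair of points of x indexed by S mutually satisfies the speed constraint (for all i, j ∈ S with i < j, d(x_i, x_j) ≤ s·(t_j − t_i)). Then there exists a repair x'_1, …, x'_n ∈ ℝ^D such that x'_i = x_i for every i ∈ S and the repaired series satisfies the speed constraint for all pairs: d(x'_i, x'_j) ≤ s·(t_j − t_i) for all 1 ≤ i < j ≤ n. (Such a repair is obtained by linearly interpolating each index strictly between two consecutive indices of S between their values, and by assigning to indices before the first index of S, resp. after the last index of S, the value of that nearest index of S.) -/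
/-!
Let `S` be the closed set of times whose points are kept. Fill its gaps by chords and continue by
constants beyond its extreme points. Two times in the same gap lie on one chord, whose slope has norm
at most the speed bound; two times separated by a point `c ∈ S` are compared through `c`, and the
bounds add up because `c` lies between them.
-/

open Set
open scoped NNReal

section LinearOrder

variable {α : Type*} [LinearOrder α] {S : Set α} {p q : α}

theorem inter_Iic_eq_of_disjoint_Icc (hpq : p ≤ q) (h : Disjoint S (Icc p q)) :
    S ∩ Iic p = S ∩ Iic q := by
  ext c
  refine and_congr_right fun hc => ⟨fun hcp => le_trans hcp hpq, fun hcq => ?_⟩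
  exact le_of_not_ge fun hpc => disjoint_left.1 h hc ⟨hpc, hcq⟩

theorem inter_Ici_eq_of_disjoint_Icc (hpq : p ≤ q) (h : Disjoint S (Icc p q)) :
    S ∩ Ici p = S ∩ Ici q := by
  ext c
  refine and_congr_right fun hc => ⟨fun hpc => ?_, fun hqc => hpq.trans hqc⟩
  exact le_of_not_ge fun hcq => disjoint_left.1 h hc ⟨hpc, hcq⟩

theorem inter_Iic_nonempty_or_inter_Ici_nonempty (hne : S.Nonempty) (p : α) :
    (S ∩ Iic p).Nonempty ∨ (S ∩ Ici p).Nonempty := by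
  obtain ⟨c, hc⟩ := hne
  exact (le_total c p).imp (fun hcp => ⟨c, hc, hcp⟩) (fun hpc => ⟨c, hc, hpc⟩)

end LinearOrder

section Nodes

variable {α : Type*} [ConditionallyCompleteLinearOrder α] {S : Set α} {p q c : α}

open Classical in
/-- The last point of the closed set `S` at or before `p`. If there is none, it is the first point of
`S`, so that interpolating between `leftNode S p` and `rightNode S p` is constant there. -/
noncomputable def leftNode (S : Set α) (p : α) : α :=
  if (S ∩ Iic p).Nonempty then sSup (S ∩ Iic p) else sInf (S ∩ Ici p)

open Classical in
/-- The first point of the closed set `S` at or after `p`. If there is none, it is the last point of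
`S`, so that interpolating between `leftNode S p` and `rightNode S p` is constant there. -/
noncomputable def rightNode (S : Set α) (p : α) : α :=
  if (S ∩ Ici p).Nonempty then sInf (S ∩ Ici p) else sSup (S ∩ Iic p)

theorem leftNode_eq_of_disjoint_Icc (hpq : p ≤ q) (h : Disjoint S (Icc p q)) :
    leftNode S p = leftNode S q := by
  rw [leftNode, leftNode, inter_Iic_eq_of_disjoint_Icc hpq h, inter_Ici_eq_of_disjoint_Icc hpq h]

theorem rightNode_eq_of_disjoint_Icc (hpq : p ≤ q) (h : Disjoint S (Icc p q)) :
    rightNode S p = rightNode S q := by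
  rw [rightNode, rightNode, inter_Iic_eq_of_disjoint_Icc hpq h, inter_Ici_eq_of_disjoint_Icc hpq h]

variable [TopologicalSpace α] [OrderTopology α]

theorem isGreatest_leftNode (hS : IsClosed S) (h : (S ∩ Iic p).Nonempty) :
    IsGreatest (S ∩ Iic p) (leftNode S p) := by
  rw [leftNode, if_pos h]
  exact (hS.inter isClosed_Iic).isGreatest_csSup h (bddAbove_Iic.mono inter_subset_right)

theorem isLeast_rightNode (hS : IsClosed S) (h : (S ∩ Ici p).Nonempty) :
    IsLeast (S ∩ Ici p) (rightNode S p) := by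
  rw [rightNode, if_pos h]
  exact (hS.inter isClosed_Ici).isLeast_csInf h (bddBelow_Ici.mono inter_subset_right)

theorem leftNode_mem (hS : IsClosed S) (hne : S.Nonempty) (p : α) : leftNode S p ∈ S := by
  by_cases h : (S ∩ Iic p).Nonempty
  · exact (isGreatest_leftNode hS h).1.1
  · have h' := (inter_Iic_nonempty_or_inter_Ici_nonempty hne p).resolve_left h
    have heq : leftNode S p = rightNode S p := by rw [leftNode, rightNode, if_neg h, if_pos h']
    exact heq ▸ (isLeast_rightNode hS h').1.1

theorem rightNode_mem (hS : IsClosed S) (hne : S.Nonempty) (p : α) : rightNode S p ∈ S := by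
  by_cases h : (S ∩ Ici p).Nonempty
  · exact (isLeast_rightNode hS h).1.1
  · have h' := (inter_Iic_nonempty_or_inter_Ici_nonempty hne p).resolve_right h
    have heq : rightNode S p = leftNode S p := by rw [leftNode, rightNode, if_neg h, if_pos h']
    exact heq ▸ (isGreatest_leftNode hS h').1.1

theorem leftNode_mem_Icc (hS : IsClosed S) (hc : c ∈ S) (hcp : c ≤ p) :
    leftNode S p ∈ Icc c p := by
  have h := isGreatest_leftNode hS ⟨c, hc, hcp⟩
  exact ⟨h.2 ⟨hc, hcp⟩, h.1.2⟩

theorem rightNode_mem_Icc (hS : IsClosed S) (hc : c ∈ S) (hpc : p ≤ c) :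
    rightNode S p ∈ Icc p c := by
  have h := isLeast_rightNode hS ⟨c, hc, hpc⟩
  exact ⟨h.1.2, h.2 ⟨hc, hpc⟩⟩

theorem leftNode_eq_self (hS : IsClosed S) (hp : p ∈ S) : leftNode S p = p := by
  simpa only [Icc_self, mem_singleton_iff] using leftNode_mem_Icc hS hp le_rfl

end Nodes

theorem dist_le_mul_dist_of_mem_segment {V X : Type*} [SeminormedAddCommGroup V] [NormedSpace ℝ V]
    [PseudoMetricSpace X] {x y z : X} {K : ℝ} {a b c : V} (hb : b ∈ segment ℝ a c)
    (hxy : dist x y ≤ K * dist a b) (hyz : dist y z ≤ K * dist b c) :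
    dist x z ≤ K * dist a c := by
  calc dist x z ≤ dist x y + dist y z := dist_triangle x y z
    _ ≤ K * dist a b + K * dist b c := add_le_add hxy hyz
    _ = K * dist a c := by rw [← mul_add, dist_add_dist_of_mem_segment hb]

section Chord

variable {𝕜 E : Type*} [Field 𝕜] [AddCommGroup E] [Module 𝕜 E]

/-- The chord of `f` through the points over `a` and `b`; it is constant if `a = b`, since
`slope f a a = 0`. -/
def chord (f : 𝕜 → E) (a b p : 𝕜) : E :=
  f a + (p - a) • slope f a b

theorem chord_left (f : 𝕜 → E) (a b : 𝕜) : chord f a b a = f a := by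
  rw [chord, sub_self, zero_smul, add_zero]

theorem chord_right (f : 𝕜 → E) (a b : 𝕜) : chord f a b b = f b := by
  rw [chord, sub_smul_slope, vsub_eq_sub, add_sub_cancel]

end Chord

section Interpolation

variable {E : Type*} [SeminormedAddCommGroup E] [NormedSpace ℝ E]
  {S : Set ℝ} {f : ℝ → E} {K : ℝ≥0} {a b c : ℝ}

theorem norm_slope_le_of_dist_le (h : dist (f a) (f b) ≤ K * dist a b) : ‖slope f a b‖ ≤ K := by
  rw [slope_def_module, norm_smul, norm_inv, inv_mul_eq_div, ← dist_eq_norm, ← dist_eq_norm,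
    dist_comm, dist_comm b]
  exact div_le_of_le_mul₀ dist_nonneg K.coe_nonneg h

theorem lipschitzWith_chord (h : dist (f a) (f b) ≤ K * dist a b) :
    LipschitzWith K (chord f a b) := by
  refine LipschitzWith.of_dist_le_mul fun p q => ?_
  calc dist (chord f a b p) (chord f a b q) = ‖slope f a b‖ * dist p q := by
        rw [chord, chord, dist_add_left, dist_eq_norm, ← sub_smul, sub_sub_sub_cancel_right,
          norm_smul, ← dist_eq_norm, mul_comm]
    _ ≤ K * dist p q :=
        mul_le_mul_of_nonneg_right (norm_slope_le_of_dist_le h) dist_nonneg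

/-- The piecewise linear interpolation of the values of `f` on `S`, continued by constants beyond
the extreme points of `S`. -/
noncomputable def linearInterpolation (S : Set ℝ) (f : ℝ → E) (p : ℝ) : E :=
  chord f (leftNode S p) (rightNode S p) p

theorem linearInterpolation_eqOn (hS : IsClosed S) (f : ℝ → E) :
    EqOn (linearInterpolation S f) f S := fun p hp => by
  rw [linearInterpolation, leftNode_eq_self hS hp, chord_left]

theorem lipschitzWith_chord_nodes (hS : IsClosed S) (hne : S.Nonempty)
    (hf : LipschitzOnWith K f S) (p : ℝ) :
    LipschitzWith K (chord f (leftNode S p) (rightNode S p)) :=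
  lipschitzWith_chord (hf.dist_le_mul _ (leftNode_mem hS hne p) _ (rightNode_mem hS hne p))

theorem dist_linearInterpolation_le_of_mem (hS : IsClosed S) (hf : LipschitzOnWith K f S)
    (hc : c ∈ S) (p : ℝ) : dist (linearInterpolation S f p) (f c) ≤ K * dist p c := by
  have hchord := lipschitzWith_chord_nodes hS ⟨c, hc⟩ hf p
  rcases le_total c p with hcp | hpc
  · have hleft :
        dist (linearInterpolation S f p) (f (leftNode S p)) ≤ K * dist p (leftNode S p) := by
      simpa only [linearInterpolation, chord_left] using hchord.dist_le_mul p (leftNode S p)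
    have hseg : leftNode S p ∈ segment ℝ p c :=
      segment_symm ℝ c p ▸ Icc_subset_segment (leftNode_mem_Icc hS hc hcp)
    exact dist_le_mul_dist_of_mem_segment hseg hleft
      (hf.dist_le_mul _ (leftNode_mem hS ⟨c, hc⟩ p) _ hc)
  · have hright :
        dist (linearInterpolation S f p) (f (rightNode S p)) ≤ K * dist p (rightNode S p) := by
      simpa only [linearInterpolation, chord_right] using hchord.dist_le_mul p (rightNode S p)
    have hseg : rightNode S p ∈ segment ℝ p c :=
      Icc_subset_segment (rightNode_mem_Icc hS hc hpc)
    exact dist_le_mul_dist_of_mem_segment hseg hright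
      (hf.dist_le_mul _ (rightNode_mem hS ⟨c, hc⟩ p) _ hc)

theorem lipschitzWith_linearInterpolation (hS : IsClosed S) (hne : S.Nonempty)
    (hf : LipschitzOnWith K f S) : LipschitzWith K (linearInterpolation S f) := by
  refine LipschitzWith.of_dist_le_mul fun p q => ?_
  wlog hpq : p ≤ q generalizing p q
  · simpa only [dist_comm] using this q p (le_of_not_ge hpq)
  by_cases hgap : Disjoint S (Icc p q)
  · rw [linearInterpolation, linearInterpolation, leftNode_eq_of_disjoint_Icc hpq hgap,
      rightNode_eq_of_disjoint_Icc hpq hgap]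
    exact (lipschitzWith_chord_nodes hS hne hf q).dist_le_mul p q
  · obtain ⟨c, hc, hcpq⟩ := not_disjoint_iff.1 hgap
    refine dist_le_mul_dist_of_mem_segment (Icc_subset_segment hcpq)
      (dist_linearInterpolation_le_of_mem hS hf hc p) ?_
    rw [dist_comm, dist_comm c]
    exact dist_linearInterpolation_le_of_mem hS hf hc q

theorem exists_lipschitzWith_eqOn_of_isClosed (hS : IsClosed S) (hf : LipschitzOnWith K f S) :
    ∃ g : ℝ → E, LipschitzWith K g ∧ EqOn g f S := by
  rcases S.eq_empty_or_nonempty with rfl | hne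
  · exact ⟨0, LipschitzWith.const' 0, eqOn_empty _ _⟩
  · exact ⟨linearInterpolation S f, lipschitzWith_linearInterpolation hS hne hf,
      linearInterpolation_eqOn hS f⟩

end Interpolation

theorem lipschitzOnWith_image_iff_of_monotone {X ι : Type*} [PseudoMetricSpace X] [LinearOrder ι]
    {t : ι → ℝ} (ht : Monotone t) {S : Set ι} {f : ℝ → X} {K : ℝ≥0} :
    LipschitzOnWith K f (t '' S) ↔
      ∀ i ∈ S, ∀ j ∈ S, i < j → dist (f (t i)) (f (t j)) ≤ K * (t j - t i) := by
  have hdist {i j : ι} (hij : i ≤ j) : dist (t i) (t j) = t j - t i := by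
    rw [dist_comm, Real.dist_eq, abs_of_nonneg (sub_nonneg.2 (ht hij))]
  simp only [lipschitzOnWith_iff_dist_le_mul, forall_mem_image]
  refine ⟨fun h i hi j hj hij => hdist hij.le ▸ h hi hj, fun h i hi j hj => ?_⟩
  rcases lt_trichotomy i j with hij | rfl | hji
  · exact hdist hij.le ▸ h i hi j hj hij
  · simp only [dist_self, mul_zero, le_refl]
  · rw [dist_comm, dist_comm (t i), hdist hji.le]
    exact h j hj i hi hji

theorem exists_repair_fixing_compatible_subset_general {E ι : Type*} [SeminormedAddCommGroup E]
    [NormedSpace ℝ E] [LinearOrder ι] {s : ℝ} (hs : 0 ≤ s) (x : ι → E) {t : ι → ℝ}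
    (ht : StrictMono t) {S : Set ι} (hS : IsClosed (t '' S))
    (hcomp : ∀ i ∈ S, ∀ j ∈ S, i < j → dist (x i) (x j) ≤ s * (t j - t i)) :
    ∃ x' : ι → E, (∀ i ∈ S, x' i = x i) ∧
      ∀ i j, i < j → dist (x' i) (x' j) ≤ s * (t j - t i) := by
  lift s to ℝ≥0 using hs
  have hext (i : ι) : Function.extend t x 0 (t i) = x i := ht.injective.extend_apply x 0 i
  have hlip : LipschitzOnWith s (Function.extend t x 0) (t '' S) := by
    simpa only [lipschitzOnWith_image_iff_of_monotone ht.monotone, hext] using hcomp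
  obtain ⟨g, hg, hgx⟩ := exists_lipschitzWith_eqOn_of_isClosed hS hlip
  have hspeed := (lipschitzOnWith_image_iff_of_monotone ht.monotone).1
    (hg.lipschitzOnWith (s := t '' univ))
  exact ⟨g ∘ t, fun i hi => (hgx (mem_image_of_mem t hi)).trans (hext i),
    fun i j hij => hspeed i (mem_univ i) j (mem_univ j) hij⟩

/-- Given a nonempty set `S` of indices whose points mutually satisfy the speed
constraint, there exists a repair which keeps all points indexed by `S`
unchanged and satisfies the speed constraint for all pairs. -/
theorem exists_repair_fixing_compatible_subset
    (D : ℕ) (hD : 1 ≤ D) (s : ℝ) (hs : 0 < s)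
    (n : ℕ) (x : Fin n → EuclideanSpace ℝ (Fin D)) (t : Fin n → ℝ)
    (ht : StrictMono t)
    (S : Finset (Fin n)) (hS : S.Nonempty)
    (hcomp : ∀ i ∈ S, ∀ j ∈ S, i < j → dist (x i) (x j) ≤ s * (t j - t i)) :
    ∃ x' : Fin n → EuclideanSpace ℝ (Fin D),
      (∀ i ∈ S, x' i = x i) ∧
      (∀ i j : Fin n, i < j → dist (x' i) (x' j) ≤ s * (t j - t i)) :=
  exists_repair_fixing_compatible_subset_general hs.le x ht (S.finite_toSet.image t).isClosed hcomp
end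

section
/- Let D ≥ 1, let s > 0 be a speed constraint, and let x_1, …, x_n ∈ ℝ^D be a time series with strictly increasing timestamps t_1 < … < t_n. Let L be the maximum cardinality of a subset S ⊆ {1, …, n} such that every pair of points of x indexed by S mutually satisfies the speed constraint. Then every repair x'_1, …, x'_n that satisfies the speed constraint for all pairs (d(x'_i, x'_j) ≤ s·(t_j − t_i) for all i < j) must modify at least n − L points; that is, the number of indices i with x'_i ≠ x_i is at least n − L. -/
section

variable {ι X : Type*}

/-- The repair number `Δ(x', x)`: how many points the repair `x'` of `x` modifies. Infinitely many
modified points count as `0`, so it is meaningful only for finite index types. -/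
noncomputable def repairNumber (x' x : ι → X) : ℕ :=
  {i | x' i ≠ x i}.ncard

theorem ncard_setOf_eq_add_repairNumber [Finite ι] (x' x : ι → X) :
    {i | x' i = x i}.ncard + repairNumber x' x = Nat.card ι :=
  Set.ncard_add_ncard_compl {i | x' i = x i}

variable [LT ι] [Dist X] {s : ℝ} {t : ι → ℝ} {x x' : ι → X} {S T : Set ι}

/-- The points of the time series `x` (with timestamps `t`) indexed by `S` mutually satisfy the
speed constraint `s`. Pairs are ordered by index; for increasing `t` this is the order in time. -/
def SatisfiesSpeedConstraintOn (s : ℝ) (t : ι → ℝ) (x : ι → X) (S : Set ι) : Prop :=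
  ∀ i ∈ S, ∀ j ∈ S, i < j → dist (x i) (x j) ≤ s * (t j - t i)

theorem SatisfiesSpeedConstraintOn.mono (h : SatisfiesSpeedConstraintOn s t x T) (hST : S ⊆ T) :
    SatisfiesSpeedConstraintOn s t x S :=
  fun i hi j hj => h i (hST hi) j (hST hj)

theorem SatisfiesSpeedConstraintOn.congr (h : SatisfiesSpeedConstraintOn s t x' S)
    (hx : Set.EqOn x' x S) : SatisfiesSpeedConstraintOn s t x S := by
  intro i hi j hj hij
  rw [← hx hi, ← hx hj]
  exact h i hi j hj hij

theorem repair_number_lower_bound_general [Finite ι] {L : ℕ}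
    (hL : ∀ S : Finset ι, SatisfiesSpeedConstraintOn s t x S → S.card ≤ L)
    (hx' : SatisfiesSpeedConstraintOn s t x' Set.univ) :
    Nat.card ι - L ≤ repairNumber x' x := by
  have unmodified_satisfies : SatisfiesSpeedConstraintOn s t x {i | x' i = x i} :=
    (hx'.mono (Set.subset_univ _)).congr fun _ hi => hi
  have unmodified_le : {i | x' i = x i}.ncard ≤ L := by
    rw [Set.ncard_eq_toFinset_card]
    exact hL _ (by rwa [Set.Finite.coe_toFinset])
  rw [← ncard_setOf_eq_add_repairNumber x' x, tsub_le_iff_left]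
  gcongr

end

/-- Lower bound for the repair number: if `L` is the maximum cardinality of a
set of indices whose points mutually satisfy the speed constraint, then any
repair satisfying the speed constraint must modify at least `n − L` points. -/
theorem repair_number_lower_bound
    (D : ℕ) (hD : 1 ≤ D) (s : ℝ) (hs : 0 < s)
    (n : ℕ) (x : Fin n → EuclideanSpace ℝ (Fin D)) (t : Fin n → ℝ)
    (ht : StrictMono t) (L : ℕ)
    (hL : IsGreatest {m : ℕ | ∃ S : Finset (Fin n), S.card = m ∧
            ∀ i ∈ S, ∀ j ∈ S, i < j → dist (x i) (x j) ≤ s * (t j - t i)} L)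
    (x' : Fin n → EuclideanSpace ℝ (Fin D))
    (hx' : ∀ i j : Fin n, i < j → dist (x' i) (x' j) ≤ s * (t j - t i)) :
    n - L ≤ {i : Fin n | x' i ≠ x i}.ncard := by
  simpa only [Nat.card_fin, repairNumber] using repair_number_lower_bound_general
    (fun S hS => hL.2 ⟨S, rfl, hS⟩) (fun i _ j _ => hx' i j)
end

section
/- Let D ≥ 1, let s > 0 be a speed constraint, and let x_1, …, x_n ∈ ℝ^D (n ≥ 1) be a time series with strictly increasing timestamps t_1 < … < t_n. Let L be the maximum cardinality of a subset S ⊆ {1, …, n} such that every pair of points of x indexed by S mutually satisfies the speed constraint (L ≥ 1 since any singleton qualifies). Then the minimum, over all repairs x' that satisfy the speed constraint for all pairs, of the repair number Δ(x', x) equals n − L. In particular, a minimum-fix repair changes exactly the points outside a longest mutually compatible subsequence of x. -/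
/-!
The points that a repair keeps are mutually compatible, so at least `n - L` points change.
Conversely, keep a longest compatible set and fill in the other points one at a time. By the
triangle inequality, a new point at time `τ` only has to satisfy the constraint with the nearest
neighbours `p` before `τ` and `q` after `τ`. Such a point exists because, in a normed space, closed
balls around `y p` and `y q` meet as soon as their radii add up to at least `dist (y p) (y q)`, and
the radii `s * |t p - τ|` and `s * |t q - τ|` add up to at least `s * |t p - t q|`. The latter holds
wherever `p` and `q` lie, so any index can stand in for a missing neighbour.
-/

/-- The points of the series `y` indexed by `S` pairwise satisfy the speed constraint `s`. The
timestamps `t` are compared by their distance, so that `ι` needs no order and `i`, `j` play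
symmetric roles. -/
def SpeedCompatibleOn {ι E : Type*} [Dist E] (s : ℝ) (t : ι → ℝ) (y : ι → E) (S : Set ι) : Prop :=
  ∀ i ∈ S, ∀ j ∈ S, dist (y i) (y j) ≤ s * dist (t i) (t j)

namespace SpeedCompatibleOn

variable {ι E : Type*} {s τ : ℝ} {t : ι → ℝ} {y z : ι → E} {S T : Set ι}

section PseudoMetricSpace

variable [PseudoMetricSpace E]

lemma iff_forall_lt_of_monotone [LinearOrder ι] (ht : Monotone t) :
    SpeedCompatibleOn s t y S ↔
      ∀ i ∈ S, ∀ j ∈ S, i < j → dist (y i) (y j) ≤ s * (t j - t i) := by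
  have dist_eq {i j : ι} (hij : i < j) : dist (t i) (t j) = t j - t i := by
    rw [dist_comm, Real.dist_eq, abs_of_nonneg (sub_nonneg.2 (ht hij.le))]
  refine ⟨fun h i hi j hj hij ↦ dist_eq hij ▸ h i hi j hj, fun h i hi j hj ↦ ?_⟩
  rcases lt_trichotomy i j with hij | rfl | hji
  · exact dist_eq hij ▸ h i hi j hj hij
  · simp
  · rw [dist_comm, dist_comm (t i), dist_eq hji]
    exact h j hj i hi hji

lemma congr_mono (h : SpeedCompatibleOn s t y T) (hST : S ⊆ T) (hyz : S.EqOn y z) :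
    SpeedCompatibleOn s t z S := fun i hi j hj ↦ by
  rw [← hyz hi, ← hyz hj]
  exact h i (hST hi) j (hST hj)

lemma dist_le_of_between (h : SpeedCompatibleOn s t y S) {j p : ι} (hj : j ∈ S) (hp : p ∈ S)
    (hjp : t j ≤ t p) (hpτ : t p ≤ τ) {v : E} (hv : dist (y p) v ≤ s * dist (t p) τ) :
    dist (y j) v ≤ s * dist (t j) τ :=
  calc dist (y j) v ≤ dist (y j) (y p) + dist (y p) v := dist_triangle _ _ _
    _ ≤ s * dist (t j) (t p) + s * dist (t p) τ := add_le_add (h j hj p hp) hv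
    _ = s * dist (t j) τ := by
      rw [← mul_add, dist_add_dist_of_mem_segment (segment_eq_Icc (hjp.trans hpτ) ▸ ⟨hjp, hpτ⟩)]

lemma exists_mem_forall_le_dist_le (h : SpeedCompatibleOn s t y S) (hfin : S.Finite)
    (hne : S.Nonempty) (τ : ℝ) :
    ∃ p ∈ S, ∀ v, dist (y p) v ≤ s * dist (t p) τ →
      ∀ j ∈ S, t j ≤ τ → dist (y j) v ≤ s * dist (t j) τ := by
  rcases Set.eq_empty_or_nonempty {j ∈ S | t j ≤ τ} with hempty | hbefore
  · obtain ⟨p, hp⟩ := hne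
    exact ⟨p, hp, fun _ _ j hj hjτ ↦ (hempty.le ⟨hj, hjτ⟩).elim⟩
  · obtain ⟨p, ⟨hp, hpτ⟩, hmax⟩ := Set.exists_max_image _ t (hfin.sep _) hbefore
    exact ⟨p, hp, fun v hv j hj hjτ ↦ h.dist_le_of_between hj hp (hmax j ⟨hj, hjτ⟩) hpτ hv⟩

lemma neg_time (h : SpeedCompatibleOn s t y S) : SpeedCompatibleOn s (-t) y S := by
  simpa only [SpeedCompatibleOn, Pi.neg_apply, dist_neg_neg] using h

lemma exists_mem_forall_ge_dist_le (h : SpeedCompatibleOn s t y S) (hfin : S.Finite)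
    (hne : S.Nonempty) (τ : ℝ) :
    ∃ q ∈ S, ∀ v, dist (y q) v ≤ s * dist (t q) τ →
      ∀ j ∈ S, τ ≤ t j → dist (y j) v ≤ s * dist (t j) τ := by
  simpa only [Pi.neg_apply, dist_neg_neg, neg_le_neg_iff] using
    h.neg_time.exists_mem_forall_le_dist_le hfin hne (-τ)

lemma update_insert [DecidableEq ι] (h : SpeedCompatibleOn s t y S) {a : ι} (ha : a ∉ S) {v : E}
    (hv : ∀ j ∈ S, dist (y j) v ≤ s * dist (t j) (t a)) :
    SpeedCompatibleOn s t (Function.update y a v) (insert a S) := by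
  have update_eq {j : ι} (hj : j ∈ S) : Function.update y a v j = y j :=
    Function.update_of_ne (ne_of_mem_of_not_mem hj ha) _ _
  rintro i (rfl | hi) j (rfl | hj)
  · simp
  · rw [Function.update_self, update_eq hj, dist_comm, dist_comm (t i)]
    exact hv j hj
  · rw [Function.update_self, update_eq hi]
    exact hv i hi
  · rw [update_eq hi, update_eq hj]
    exact h i hi j hj

lemma card_sub_le_ncard_ne [Finite ι] (h : SpeedCompatibleOn s t z Set.univ) {L : ℕ}
    (hL : ∀ S : Finset ι, SpeedCompatibleOn s t y S → S.card ≤ L) :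
    Nat.card ι - L ≤ {i | z i ≠ y i}.ncard := by
  have kept_le : {i | z i = y i}.ncard ≤ L := by
    rw [Set.ncard_eq_toFinset_card]
    exact hL _ (h.congr_mono (Set.subset_univ _) (by simp [Set.EqOn]))
  calc Nat.card ι - L ≤ Nat.card ι - {i | z i = y i}.ncard := Nat.sub_le_sub_left kept_le _
    _ = {i | z i ≠ y i}.ncard := (Set.ncard_compl _).symm

end PseudoMetricSpace

variable [SeminormedAddCommGroup E] [NormedSpace ℝ E]

lemma exists_dist_le_and_dist_le (h : SpeedCompatibleOn s t y S) (hs : 0 ≤ s) {p q : ι}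
    (hp : p ∈ S) (hq : q ∈ S) (τ : ℝ) :
    ∃ v, dist (y p) v ≤ s * dist (t p) τ ∧ dist (y q) v ≤ s * dist (t q) τ := by
  have hpq : dist (y p) (y q) ≤ s * dist (t q) τ + s * dist (t p) τ :=
    calc dist (y p) (y q) ≤ s * dist (t p) (t q) := h p hp q hq
      _ ≤ s * (dist (t p) τ + dist (t q) τ) := by gcongr; exact dist_triangle_right _ _ _
      _ = s * dist (t q) τ + s * dist (t p) τ := by ring
  obtain ⟨v, hpv, hvq⟩ := exists_dist_le_le (by positivity) (by positivity) hpq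
  exact ⟨v, hpv, dist_comm v (y q) ▸ hvq⟩

lemma exists_forall_dist_le (h : SpeedCompatibleOn s t y S) (hs : 0 ≤ s) (hfin : S.Finite)
    (τ : ℝ) : ∃ v, ∀ j ∈ S, dist (y j) v ≤ s * dist (t j) τ := by
  rcases S.eq_empty_or_nonempty with rfl | hne
  · exact ⟨0, by simp⟩
  obtain ⟨p, hp, before⟩ := h.exists_mem_forall_le_dist_le hfin hne τ
  obtain ⟨q, hq, after⟩ := h.exists_mem_forall_ge_dist_le hfin hne τ
  obtain ⟨v, hpv, hqv⟩ := h.exists_dist_le_and_dist_le hs hp hq τ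
  exact ⟨v, fun j hj ↦ (le_total (t j) τ).elim (before v hpv j hj) (after v hqv j hj)⟩

lemma exists_extension (h : SpeedCompatibleOn s t y S) (hs : 0 ≤ s) (hST : S ⊆ T)
    (hT : T.Finite) : ∃ z, S.EqOn z y ∧ SpeedCompatibleOn s t z T := by
  classical
  refine (hT.induction_to (C := fun R ↦ S ⊆ R ∧ ∃ z, S.EqOn z y ∧ SpeedCompatibleOn s t z R) S hST
    ⟨subset_rfl, y, Set.eqOn_refl y S, h⟩ ?_).2
  rintro R hRT ⟨hSR, z, hzy, hz⟩
  obtain ⟨a, haT, haR⟩ := Set.exists_of_ssubset hRT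
  obtain ⟨v, hv⟩ := hz.exists_forall_dist_le hs (hT.subset hRT.subset) (t a)
  have update_eqOn : S.EqOn (Function.update z a v) y := fun i hi ↦ by
    rw [Function.update_of_ne (ne_of_mem_of_not_mem (hSR hi) haR), hzy hi]
  exact ⟨a, ⟨haT, haR⟩, hSR.trans (Set.subset_insert a R), _, update_eqOn, hz.update_insert haR hv⟩

end SpeedCompatibleOn

lemma ncard_ne_le_of_eqOn {ι E : Type*} [Finite ι] {y z : ι → E} {S : Set ι} (h : S.EqOn z y) :
    {i | z i ≠ y i}.ncard ≤ Nat.card ι - S.ncard :=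
  calc {i | z i ≠ y i}.ncard ≤ Sᶜ.ncard := Set.ncard_le_ncard fun _ hi hiS ↦ hi (h hiS)
    _ = Nat.card ι - S.ncard := Set.ncard_compl S

theorem min_fix_eq_n_sub_longest_general {ι E : Type*} [Finite ι] [SeminormedAddCommGroup E]
    [NormedSpace ℝ E] {s : ℝ} (hs : 0 ≤ s) (x : ι → E) (t : ι → ℝ) (L : ℕ)
    (hL : IsGreatest {m : ℕ | ∃ S : Finset ι, S.card = m ∧ SpeedCompatibleOn s t x S} L) :
    IsLeast {m : ℕ | ∃ x' : ι → E, SpeedCompatibleOn s t x' Set.univ ∧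
      m = {i | x' i ≠ x i}.ncard} (Nat.card ι - L) := by
  have lower {x' : ι → E} (hx' : SpeedCompatibleOn s t x' Set.univ) :
      Nat.card ι - L ≤ {i | x' i ≠ x i}.ncard :=
    hx'.card_sub_le_ncard_ne fun S hS ↦ hL.2 ⟨S, rfl, hS⟩
  obtain ⟨S, rfl, hS⟩ := hL.1
  obtain ⟨x', hx'x, hx'⟩ := hS.exists_extension hs (Set.subset_univ _) Set.finite_univ
  have upper : {i | x' i ≠ x i}.ncard ≤ Nat.card ι - S.card :=
    Set.ncard_coe_finset S ▸ ncard_ne_le_of_eqOn hx'x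
  exact ⟨⟨x', hx', (lower hx').antisymm upper⟩, by rintro _ ⟨z, hz, rfl⟩; exact lower hz⟩

/-- Minimum-fix characterization: the minimum repair number over all repairs
satisfying the speed constraint equals `n − L`, where `L` is the maximum
cardinality of a set of indices whose points mutually satisfy the speed
constraint. -/
theorem min_fix_eq_n_sub_longest
    (D : ℕ) (hD : 1 ≤ D) (s : ℝ) (hs : 0 < s)
    (n : ℕ) (hn : 1 ≤ n)
    (x : Fin n → EuclideanSpace ℝ (Fin D)) (t : Fin n → ℝ)
    (ht : StrictMono t) (L : ℕ)
    (hL : IsGreatest {m : ℕ | ∃ S : Finset (Fin n), S.card = m ∧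
            ∀ i ∈ S, ∀ j ∈ S, i < j → dist (x i) (x j) ≤ s * (t j - t i)} L) :
    IsLeast {m : ℕ | ∃ x' : Fin n → EuclideanSpace ℝ (Fin D),
        (∀ i j : Fin n, i < j → dist (x' i) (x' j) ≤ s * (t j - t i)) ∧
        m = {i : Fin n | x' i ≠ x i}.ncard} (n - L) := by
  simpa [SpeedCompatibleOn.iff_forall_lt_of_monotone ht.monotone] using
    min_fix_eq_n_sub_longest_general hs.le x t L
      (by simpa [SpeedCompatibleOn.iff_forall_lt_of_monotone ht.monotone] using hL)
end

section
/- Let D ≥ 1, let s > 0 be a speed constraint, and let t_p < t_k < t_m be real timestamps. Let x'_p, x_m ∈ ℝ^D with d(x'_p, x_m) ≤ s·(t_m − t_p), and let x'_k = x'_p + ((t_k − t_p)/(t_m − t_p))·(x_m − x'_p) be the interpolated point. Then for any earlier point x'_j ∈ ℝ^D at a timestamp t_j < t_p such that d(x'_j, x'_p) ≤ s·(t_p − t_j), one also has d(x'_j, x'_k) ≤ s·(t_k − t_j); that is, the interpolated repair remains compatible with every previously fixed point that is compatible with x'_p. -/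
/-- The speed constraint `s` between a point `x` at time `t` and a point `x'` at a later time `t'`.
The order of the timestamps is not recorded separately: for `0 < s` the inequality forces
`t ≤ t'`. -/
def SatisfiesSpeedConstraint {X : Type*} [PseudoMetricSpace X] (s t : ℝ) (x : X) (t' : ℝ) (x' : X) :
    Prop :=
  dist x x' ≤ s * (t' - t)

namespace SatisfiesSpeedConstraint

theorem trans {X : Type*} [PseudoMetricSpace X] {s t₁ t₂ t₃ : ℝ} {x₁ x₂ x₃ : X}
    (h₁₂ : SatisfiesSpeedConstraint s t₁ x₁ t₂ x₂)
    (h₂₃ : SatisfiesSpeedConstraint s t₂ x₂ t₃ x₃) :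
    SatisfiesSpeedConstraint s t₁ x₁ t₃ x₃ :=
  calc dist x₁ x₃
      ≤ dist x₁ x₂ + dist x₂ x₃ := dist_triangle x₁ x₂ x₃
    _ ≤ s * (t₂ - t₁) + s * (t₃ - t₂) := add_le_add h₁₂ h₂₃
    _ = s * (t₃ - t₁) := by ring

theorem left_lineMap {V P : Type*} [SeminormedAddCommGroup V] [NormedSpace ℝ V]
    [PseudoMetricSpace P] [NormedAddTorsor V P] {s t t' c : ℝ} {x x' : P}
    (h : SatisfiesSpeedConstraint s t x t' x') (hc : 0 ≤ c) :
    SatisfiesSpeedConstraint s t x (AffineMap.lineMap t t' c) (AffineMap.lineMap x x' c) :=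
  calc dist x (AffineMap.lineMap x x' c)
      = c * dist x x' := by rw [dist_left_lineMap, Real.norm_of_nonneg hc]
    _ ≤ c * (s * (t' - t)) := mul_le_mul_of_nonneg_left h hc
    _ = s * (AffineMap.lineMap t t' c - t) := by
      rw [AffineMap.lineMap_apply_ring']
      ring

end SatisfiesSpeedConstraint

theorem lineMap_sub_div_sub {k : Type*} [Field k] {a b : k} (hab : a ≠ b) (x : k) :
    AffineMap.lineMap a b ((x - a) / (b - a)) = x := by
  rw [AffineMap.lineMap_apply_ring', div_mul_cancel₀ _ (sub_ne_zero.mpr hab.symm), sub_add_cancel]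

theorem interpolation_compatible_with_previous_general {V P : Type*} [SeminormedAddCommGroup V]
    [NormedSpace ℝ V] [PseudoMetricSpace P] [NormedAddTorsor V P] {s tj tp tk tm : ℝ}
    {xj xp xm : P} (htpk : tp ≤ tk) (htpm : tp < tm)
    (hpm : SatisfiesSpeedConstraint s tp xp tm xm) (hjp : SatisfiesSpeedConstraint s tj xj tp xp) :
    SatisfiesSpeedConstraint s tj xj tk (AffineMap.lineMap xp xm ((tk - tp) / (tm - tp))) := by
  have hc : 0 ≤ (tk - tp) / (tm - tp) := div_nonneg (sub_nonneg.mpr htpk) (sub_pos.mpr htpm).le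
  have hpk := hpm.left_lineMap hc
  rw [lineMap_sub_div_sub htpm.ne] at hpk
  exact hjp.trans hpk

/-- The interpolated repair remains compatible with every previously fixed
point that is compatible with `x'_p`. -/
theorem interpolation_compatible_with_previous
    (D : ℕ) (hD : 1 ≤ D) (s : ℝ) (hs : 0 < s)
    (tj tp tk tm : ℝ) (htjp : tj < tp) (htpk : tp < tk) (htkm : tk < tm)
    (xp xm : EuclideanSpace ℝ (Fin D))
    (hpm : dist xp xm ≤ s * (tm - tp))
    (xj : EuclideanSpace ℝ (Fin D))
    (hjp : dist xj xp ≤ s * (tp - tj)) :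
    dist xj (xp + ((tk - tp) / (tm - tp)) • (xm - xp)) ≤ s * (tk - tj) := by
  rw [add_comm, ← AffineMap.lineMap_apply_module']
  exact interpolation_compatible_with_previous_general htpk.le (htpk.trans htkm) hpm hjp
end
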